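/- Let S be a topological semigroup, let LUC(S)* be the continuous dual of LUC(S) equipped with the weak* topology, and let S act on LUC(S)* by (s·I)(f) = I(f·s). If X is a weak*-closed subset of the unit sphere {I ∈ LUC(S)* : ‖I‖ = 1} which is invariant under this action, then the map (s, I) ↦ s·I is jointly continuous from S × X to X. -/

import Mathlib

open BoundedContinuousFunction MeasureTheory Filter Topology

noncomputable section

namespace Paper

variable {S : Type*} [Semigroup S] [TopologicalSpace S] [ContinuousMul S]

/-- Left translate: `(f·s)(t) = f (s * t)`. -/
def lTrans (f : S →ᵇ ℝ) (s : S) : S →ᵇ ℝ :=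
  f.compContinuous ⟨fun t => s * t, continuous_mul_left s⟩

/-- Right translate: `(s·f)(t) = f (t * s)`. -/
def rTrans (f : S →ᵇ ℝ) (s : S) : S →ᵇ ℝ :=
  f.compContinuous ⟨fun t => t * s, continuous_mul_right s⟩

@[simp] lemma lTrans_apply (f : S →ᵇ ℝ) (s t : S) : lTrans f s t = f (s * t) := rfl
@[simp] lemma rTrans_apply (f : S →ᵇ ℝ) (s t : S) : rTrans f s t = f (t * s) := rfl

variable (S) in
/-- The space of left uniformly continuous bounded functions on `S`. -/
def LUC : Submodule ℝ (S →ᵇ ℝ) where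
  carrier := {f | Continuous fun s => lTrans f s}
  add_mem' {f g} hf hg := by
    show Continuous fun s => lTrans (f + g) s
    have h : (fun s => lTrans (f + g) s) = fun s => lTrans f s + lTrans g s := by
      funext s; ext t; simp
    rw [h]; exact Continuous.add hf hg
  zero_mem' := by
    show Continuous fun s : S => lTrans (0 : S →ᵇ ℝ) s
    have h : (fun s : S => lTrans (0 : S →ᵇ ℝ) s) = fun _ => (0 : S →ᵇ ℝ) := by
      funext s; ext t; simp
    rw [h]; exact continuous_const
  smul_mem' r f hf := by
    show Continuous fun s => lTrans (r • f) s
    have h : (fun s => lTrans (r • f) s) = fun s => r • lTrans f s := by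
      funext s; ext t; simp
    rw [h]; exact Continuous.const_smul hf r

variable (S) in
/-- The space of right uniformly continuous bounded functions on `S`. -/
def RUC : Submodule ℝ (S →ᵇ ℝ) where
  carrier := {f | Continuous fun s => rTrans f s}
  add_mem' {f g} hf hg := by
    show Continuous fun s => rTrans (f + g) s
    have h : (fun s => rTrans (f + g) s) = fun s => rTrans f s + rTrans g s := by
      funext s; ext t; simp
    rw [h]; exact Continuous.add hf hg
  zero_mem' := by
    show Continuous fun s : S => rTrans (0 : S →ᵇ ℝ) s
    have h : (fun s : S => rTrans (0 : S →ᵇ ℝ) s) = fun _ => (0 : S →ᵇ ℝ) := by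
      funext s; ext t; simp
    rw [h]; exact continuous_const
  smul_mem' r f hf := by
    show Continuous fun s => rTrans (r • f) s
    have h : (fun s => rTrans (r • f) s) = fun s => r • rTrans f s := by
      funext s; ext t; simp
    rw [h]; exact Continuous.const_smul hf r

lemma mem_LUC_iff {f : S →ᵇ ℝ} : f ∈ LUC S ↔ Continuous fun s => lTrans f s := Iff.rfl

lemma mem_RUC_iff {f : S →ᵇ ℝ} : f ∈ RUC S ↔ Continuous fun s => rTrans f s := Iff.rfl

lemma one_mem_LUC : (1 : S →ᵇ ℝ) ∈ LUC S := by
  rw [mem_LUC_iff]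
  have h : (fun s : S => lTrans (1 : S →ᵇ ℝ) s) = fun _ => (1 : S →ᵇ ℝ) := by
    funext s; ext t; simp
  rw [h]; exact continuous_const

lemma one_mem_RUC : (1 : S →ᵇ ℝ) ∈ RUC S := by
  rw [mem_RUC_iff]
  have h : (fun s : S => rTrans (1 : S →ᵇ ℝ) s) = fun _ => (1 : S →ᵇ ℝ) := by
    funext s; ext t; simp
  rw [h]; exact continuous_const

lemma mul_mem_LUC {f g : S →ᵇ ℝ} (hf : f ∈ LUC S) (hg : g ∈ LUC S) : f * g ∈ LUC S := by
  rw [mem_LUC_iff] at *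
  have h : (fun s => lTrans (f * g) s) = fun s => lTrans f s * lTrans g s := by
    funext s; ext t; simp
  rw [h]; exact Continuous.mul hf hg

lemma mul_mem_RUC {f g : S →ᵇ ℝ} (hf : f ∈ RUC S) (hg : g ∈ RUC S) : f * g ∈ RUC S := by
  rw [mem_RUC_iff] at *
  have h : (fun s => rTrans (f * g) s) = fun s => rTrans f s * rTrans g s := by
    funext s; ext t; simp
  rw [h]; exact Continuous.mul hf hg

lemma lTrans_mem {f : S →ᵇ ℝ} (hf : f ∈ LUC S) (s : S) : lTrans f s ∈ LUC S := by
  rw [mem_LUC_iff] at *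
  have h : (fun t => lTrans (lTrans f s) t) = fun t => lTrans f (s * t) := by
    funext t; ext u; simp [mul_assoc]
  rw [h]; exact hf.comp (continuous_mul_left s)

lemma rTrans_mem {f : S →ᵇ ℝ} (hf : f ∈ RUC S) (s : S) : rTrans f s ∈ RUC S := by
  rw [mem_RUC_iff] at *
  have h : (fun t => rTrans (rTrans f s) t) = fun t => rTrans f (t * s) := by
    funext t; ext u; simp [mul_assoc]
  rw [h]; exact hf.comp (continuous_mul_right s)

variable (S) in
/-- `I` is a left invariant mean on `LUC S`. -/
def IsLeftInvariantMean (I : LUC S →ₗ[ℝ] ℝ) : Prop :=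
  I ⟨1, one_mem_LUC⟩ = 1 ∧
  (∀ f : LUC S, 0 ≤ (f : S →ᵇ ℝ) → 0 ≤ I f) ∧
  ∀ (f : S →ᵇ ℝ) (hf : f ∈ LUC S) (s : S),
    I ⟨lTrans f s, lTrans_mem hf s⟩ = I ⟨f, hf⟩

variable (S) in
/-- `I` is a right invariant mean on `RUC S`. -/
def IsRightInvariantMean (I : RUC S →ₗ[ℝ] ℝ) : Prop :=
  I ⟨1, one_mem_RUC⟩ = 1 ∧
  (∀ f : RUC S, 0 ≤ (f : S →ᵇ ℝ) → 0 ≤ I f) ∧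
  ∀ (f : S →ᵇ ℝ) (hf : f ∈ RUC S) (s : S),
    I ⟨rTrans f s, rTrans_mem hf s⟩ = I ⟨f, hf⟩

variable (S) in
def LeftAmenable : Prop := ∃ I : LUC S →ₗ[ℝ] ℝ, IsLeftInvariantMean S I

variable (S) in
def RightAmenable : Prop := ∃ I : RUC S →ₗ[ℝ] ℝ, IsRightInvariantMean S I

variable (S) in
/-- A topological semigroup is amenable if `LUC` admits a left invariant mean and
`RUC` admits a right invariant mean. -/
def Amenable : Prop := LeftAmenable S ∧ RightAmenable S

variable (S) in
/-- `I` is a multiplicative left invariant mean on `LUC S`. -/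
def IsMultLeftInvariantMean (I : LUC S →ₗ[ℝ] ℝ) : Prop :=
  IsLeftInvariantMean S I ∧
  ∀ (f g : S →ᵇ ℝ) (hf : f ∈ LUC S) (hg : g ∈ LUC S),
    I ⟨f * g, mul_mem_LUC hf hg⟩ = I ⟨f, hf⟩ * I ⟨g, hg⟩

variable (S) in
def IsMultRightInvariantMean (I : RUC S →ₗ[ℝ] ℝ) : Prop :=
  IsRightInvariantMean S I ∧
  ∀ (f g : S →ᵇ ℝ) (hf : f ∈ RUC S) (hg : g ∈ RUC S),
    I ⟨f * g, mul_mem_RUC hf hg⟩ = I ⟨f, hf⟩ * I ⟨g, hg⟩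

variable (S) in
def ExtremelyLeftAmenable : Prop := ∃ I : LUC S →ₗ[ℝ] ℝ, IsMultLeftInvariantMean S I

variable (S) in
def ExtremelyRightAmenable : Prop := ∃ I : RUC S →ₗ[ℝ] ℝ, IsMultRightInvariantMean S I

variable (S) in
def ExtremelyAmenable : Prop := ExtremelyLeftAmenable S ∧ ExtremelyRightAmenable S


/-- The translation operator `f ↦ f·s` on `LUC S`, as a linear map. -/
def transOpL (s : S) : LUC S →ₗ[ℝ] LUC S where
  toFun f := ⟨lTrans f.1 s, lTrans_mem f.2 s⟩
  map_add' f g := by ext t; simp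
  map_smul' r f := by ext t; simp

/-- The translation operator `f ↦ f·s` on `LUC S`, as a continuous linear map. -/
def transOp (s : S) : LUC S →L[ℝ] LUC S :=
  ⟨transOpL s, AddMonoidHomClass.continuous_of_bound (transOpL s) 1 fun f => by
    rw [one_mul]
    show ‖lTrans (f : S →ᵇ ℝ) s‖ ≤ ‖(f : S →ᵇ ℝ)‖
    exact norm_compContinuous_le (f : S →ᵇ ℝ) ⟨fun t => s * t, continuous_mul_left s⟩⟩

/-- The natural left action of `S` on the dual of `LUC S`: `(s·I)(f) = I (f·s)`. -/
def actDual (s : S) (I : WeakDual ℝ (LUC S)) : WeakDual ℝ (LUC S) :=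
  ContinuousLinearMap.comp I (transOp s)

/-- The topological dual of a seminormed space `E` (the former Mathlib `NormedSpace.Dual`). -/
abbrev NormedSpace.Dual (𝕜 : Type*) [NontriviallyNormedField 𝕜] (E : Type*)
    [SeminormedAddCommGroup E] [NormedSpace 𝕜 E] : Type _ := E →L[𝕜] 𝕜

section BoundedFamilies

variable {𝕜 𝕜₂ E F Y : Type*} [NontriviallyNormedField 𝕜] [NontriviallyNormedField 𝕜₂]
  {σ : 𝕜 →+* 𝕜₂} [RingHomIsometric σ] [SeminormedAddCommGroup E] [NormedSpace 𝕜 E]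
  [SeminormedAddCommGroup F] [NormedSpace 𝕜₂ F] [TopologicalSpace Y]

/- A norm bound makes the family uniformly Lipschitz, so joint continuity of evaluation reduces
to continuity in each variable separately. -/
lemma continuous_clm_eval_of_norm_le {φ : Y → E →SL[σ] F} {C : ℝ} (hC : ∀ y, ‖φ y‖ ≤ C)
    (hφ : ∀ x, Continuous fun y => φ y x) :
    Continuous fun p : E × Y => φ p.2 p.1 := by
  have hlip (y : Y) : LipschitzWith C.toNNReal (φ y) :=
    (φ y).lipschitz.weaken (NNReal.le_toNNReal_of_coe_le (hC y))
  exact continuous_prod_of_continuous_lipschitzWith _ C.toNNReal hφ hlip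

end BoundedFamilies

lemma continuous_transOp_apply (f : LUC S) : Continuous fun s : S => transOp s f :=
  (mem_LUC_iff.1 f.2).subtype_mk fun s => lTrans_mem f.2 s

theorem continuous_actDual_of_closed_invariant_sphere_general
    {X : Set (WeakDual ℝ (LUC S))} {C : ℝ}
    (hC : ∀ I ∈ X, ‖(show NormedSpace.Dual ℝ (LUC S) from I)‖ ≤ C) :
    Continuous fun p : S × X => actDual p.1 (p.2 : WeakDual ℝ (LUC S)) := by
  have heval : Continuous fun q : LUC S × X =>
      (show NormedSpace.Dual ℝ (LUC S) from (q.2 : WeakDual ℝ (LUC S))) q.1 :=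
    continuous_clm_eval_of_norm_le (fun I : X => hC I I.2) fun f =>
      (WeakDual.eval_continuous f).comp continuous_subtype_val
  exact WeakDual.continuous_of_continuous_eval fun f =>
    heval.comp ((continuous_transOp_apply f).prodMap continuous_id)

/-- Lemma 4.4(i): if `X` is a weak*-closed, `S`-invariant subset of the unit sphere of
`LUC(S)*`, then the natural action `(s, I) ↦ s·I` of `S` on `X` is jointly continuous. -/
theorem continuous_actDual_of_closed_invariant_sphere
    {S : Type*} [Semigroup S] [TopologicalSpace S] [ContinuousMul S]
    (X : Set (WeakDual ℝ (LUC S))) (hclosed : IsClosed X)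
    (hsphere : ∀ I ∈ X, ‖(show NormedSpace.Dual ℝ (LUC S) from I)‖ = 1)
    (hinv : ∀ s : S, ∀ I ∈ X, actDual s I ∈ X) :
    Continuous fun p : S × X => (⟨actDual p.1 ↑p.2, hinv p.1 ↑p.2 p.2.2⟩ : X) := by
  exact (continuous_actDual_of_closed_invariant_sphere_general
    fun I hI => (hsphere I hI).le).subtype_mk _

end Paper
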